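/- arXiv:1910.13469 — 5 statements merged into one kernel-verified Lean document; each statement's English description precedes it below -/
import Mathlib

section
/- Let 0 < β < 1. There exists a unique function φ : ℝ → ℝ such that φ(x) = tanh(β·(x + φ(x))) for every x ∈ ℝ; moreover −1 < φ(x) < 1 for every x ∈ ℝ. -/
lemma aux_bd (u : ℝ) : -1 < Real.tanh u ∧ Real.tanh u < 1 := by
  have := Real.tanh_bijOn.mapsTo (Set.mem_univ u)
  exact ⟨this.1, this.2⟩

lemma aux_deriv (u : ℝ) :
    HasDerivAt (fun u => u - Real.sinh u / Real.cosh u)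
      (1 - (Real.cosh u * Real.cosh u - Real.sinh u * Real.sinh u) / Real.cosh u ^ 2) u :=
  (hasDerivAt_id u).sub
    ((Real.hasDerivAt_sinh u).div (Real.hasDerivAt_cosh u) (Real.cosh_pos u).ne')

lemma aux_mono : Monotone (fun u : ℝ => u - Real.sinh u / Real.cosh u) := by
  apply monotone_of_deriv_nonneg
  · exact fun u => (aux_deriv u).differentiableAt
  · intro u
    rw [(aux_deriv u).deriv]
    have h := Real.cosh_sq u
    have hp := Real.cosh_pos u
    rw [sub_nonneg, div_le_one (by positivity)]
    nlinarith [sq_nonneg (Real.sinh u)]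

lemma aux_lip {u v : ℝ} (h : u ≤ v) : Real.tanh v - Real.tanh u ≤ v - u := by
  have := aux_mono h
  simp only [← Real.tanh_eq_sinh_div_cosh] at this
  linarith

lemma aux_cont : Continuous Real.tanh := by
  have : Real.tanh = fun u => Real.sinh u / Real.cosh u :=
    funext Real.tanh_eq_sinh_div_cosh
  rw [this]
  exact Real.continuous_sinh.div Real.continuous_cosh fun u => (Real.cosh_pos u).ne'

lemma aux_not_lt (β : ℝ) (h0 : 0 < β) (h1 : β < 1) (x a b : ℝ)
    (ha : a = Real.tanh (β * (x + a))) (hb : b = Real.tanh (β * (x + b))) : b ≤ a := by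
  by_contra! hab
  have := aux_lip (u := β * (x + a)) (v := β * (x + b)) (by gcongr)
  rw [← ha, ← hb] at this
  nlinarith

lemma aux_ex (β x : ℝ) : ∃ m : ℝ, m = Real.tanh (β * (x + m)) := by
  have hc : Continuous (fun m : ℝ => m - Real.tanh (β * (x + m))) :=
    continuous_id.sub (aux_cont.comp (by fun_prop))
  have := intermediate_value_Icc (a := (-1 : ℝ)) (b := 1) (by norm_num) hc.continuousOn
  obtain ⟨m, -, hm⟩ := this (show (0 : ℝ) ∈ _ from
    ⟨by have := (aux_bd (β * (x + -1))).1; linarith,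
     by have := (aux_bd (β * (x + 1))).2; linarith⟩)
  exact ⟨m, by simp only at hm; linarith⟩


/-- Subcritical case 0 < β < 1: the relation m = tanh(β(x + m)) can be solved uniquely
for m as a function of x, and the solution takes values in (−1, 1). -/
theorem exists_unique_invariant_curve (β : ℝ) (h0 : 0 < β) (h1 : β < 1) :
    (∃! φ : ℝ → ℝ, ∀ x, φ x = Real.tanh (β * (x + φ x))) ∧
    (∀ φ : ℝ → ℝ, (∀ x, φ x = Real.tanh (β * (x + φ x))) →
      ∀ x, -1 < φ x ∧ φ x < 1) := by

  refine ⟨?_, fun φ h x => by rw [h x]; exact aux_bd _⟩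
  choose φ hφ using aux_ex β
  refine ⟨φ, hφ, fun ψ hψ => funext fun x => le_antisymm ?_ ?_⟩
  · exact aux_not_lt β h0 h1 x _ _ (hφ x) (hψ x)
  · exact aux_not_lt β h0 h1 x _ _ (hψ x) (hφ x)
end

section
/- Let 0 < β < 1. If x, x′, m, m′ ∈ ℝ satisfy m = tanh(β·(x + m)) and m′ = tanh(β·(x′ + m′)), then |m − m′| ≤ (β/(1 − β))·|x − x′|. In particular, the unique function φ : ℝ → ℝ with φ(x) = tanh(β(x + φ(x))) for all x is Lipschitz continuous with Lipschitz constant β/(1 − β). -/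
theorem tanh_lip_aux (a b : ℝ) : |Real.tanh a - Real.tanh b| ≤ |a - b| := by
  have hd : ∀ x : ℝ, HasDerivAt Real.tanh (1 / Real.cosh x ^ 2) x := by
    intro x
    have hc := (Real.cosh_pos x).ne'
    have h := (Real.hasDerivAt_sinh x).div (Real.hasDerivAt_cosh x) hc
    have e : (Real.sinh / Real.cosh : ℝ → ℝ) = Real.tanh := by
      funext y
      simp [Real.tanh_eq_sinh_div_cosh]
    rw [e] at h
    have e2 : Real.cosh x * Real.cosh x - Real.sinh x * Real.sinh x = 1 := by
      have := Real.cosh_sq x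
      linarith
    rw [e2] at h
    exact h
  have h := Convex.norm_image_sub_le_of_norm_hasDerivWithin_le (C := 1) (s := Set.univ)
    (fun x _ => (hd x).hasDerivWithinAt) (fun x _ => by
      have := Real.one_le_cosh x
      rw [Real.norm_eq_abs, abs_of_nonneg (by positivity)]
      rw [div_le_one (by positivity)]
      nlinarith) convex_univ (Set.mem_univ b) (Set.mem_univ a)
  simpa [Real.norm_eq_abs] using h

/-- Subcritical case 0 < β < 1: any two points on the invariant curve m = tanh(β(x + m))
satisfy |m − m′| ≤ (β/(1−β))·|x − x′|; in particular the unique solution φ of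
φ(x) = tanh(β(x + φ(x))) is Lipschitz with constant β/(1−β). -/
theorem invariant_curve_lipschitz (β : ℝ) (h0 : 0 < β) (h1 : β < 1) :
    (∀ x x' m m' : ℝ, m = Real.tanh (β * (x + m)) → m' = Real.tanh (β * (x' + m')) →
      |m - m'| ≤ β / (1 - β) * |x - x'|) ∧
    (∀ φ : ℝ → ℝ, (∀ x, φ x = Real.tanh (β * (x + φ x))) →
      ∀ x x', |φ x - φ x'| ≤ β / (1 - β) * |x - x'|) := by
  have key : ∀ x x' m m' : ℝ, m = Real.tanh (β * (x + m)) → m' = Real.tanh (β * (x' + m')) →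
      |m - m'| ≤ β / (1 - β) * |x - x'| := by
    intro x x' m m' hm hm'
    have h := tanh_lip_aux (β * (x + m)) (β * (x' + m'))
    rw [← hm, ← hm'] at h
    have e : β * (x + m) - β * (x' + m') = β * ((x - x') + (m - m')) := by ring
    rw [e, abs_mul, abs_of_pos h0] at h
    have h2 := mul_le_mul_of_nonneg_left (abs_add_le (x - x') (m - m')) h0.le
    rw [div_mul_eq_mul_div, le_div_iff₀ (by linarith)]
    linarith
  exact ⟨key, fun φ hφ x x' => key x x' _ _ (hφ x) (hφ x')⟩
end

section
/- Let β > 1, m_a := √(1 − 1/β), λ_a := (1/β)·artanh(√(1 − 1/β)), and define g : (−1,1) → ℝ by g(y) := 2βy − 2β(m_a − λ_a) − log(1+y) + log(1−y). Then g(m_a) = 0, and there exists a unique m_b ∈ (−1,1) with m_b ≠ m_a and g(m_b) = 0; moreover m_b < −m_a, m_a is a local maximum of g and −m_a is a local minimum of g, and g(y) → +∞ as y → −1⁺. -/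
/-- Inverse hyperbolic tangent: artanh(y) = (1/2)·log((1+y)/(1−y)). -/
noncomputable def artanh (y : ℝ) : ℝ := (1/2) * Real.log ((1 + y) / (1 - y))

/-- The critical ordinate m_a(β) = √(1 − 1/β). -/
noncomputable def mCrit (β : ℝ) : ℝ := Real.sqrt (1 - 1/β)

/-- The critical abscissa λ_a(β) = (1/β)·artanh(√(1 − 1/β)). -/
noncomputable def lCrit (β : ℝ) : ℝ := (1/β) * artanh (Real.sqrt (1 - 1/β))

/-- The function g(y) = 2βy − 2β(m_a − λ_a) − log(1+y) + log(1−y). -/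
noncomputable def gJump (β : ℝ) (y : ℝ) : ℝ :=
  2 * β * y - 2 * β * (mCrit β - lCrit β) - Real.log (1 + y) + Real.log (1 - y)

lemma aux_mCrit (β : ℝ) (hβ : 1 < β) :
    0 < mCrit β ∧ mCrit β < 1 ∧ β * (1 - mCrit β ^ 2) = 1 := by
  have h0 : 0 < β := by linarith
  have h1 : 1 / β < 1 := by rw [div_lt_one h0]; exact hβ
  have h2 : 0 < 1 / β := by positivity
  have h3 : mCrit β ^ 2 = 1 - 1 / β := Real.sq_sqrt (by linarith)
  have h4 : 0 < mCrit β := Real.sqrt_pos.mpr (by linarith)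
  refine ⟨h4, by nlinarith, ?_⟩
  rw [h3]; field_simp; ring

lemma aux_deriv_s6 (β : ℝ) (hβ : 1 < β) (y : ℝ) (h1 : -1 < y) (h2 : y < 1) :
    HasDerivAt (gJump β) (2 * β * (mCrit β ^ 2 - y ^ 2) / (1 - y ^ 2)) y := by
  obtain ⟨-, -, hm⟩ := aux_mCrit β hβ
  have ha : (1 + y) ≠ 0 := by linarith
  have hb : (1 - y) ≠ 0 := by linarith
  have d1 := (((hasDerivAt_id y).const_add 1).log ha)
  have d2 := (((hasDerivAt_id y).const_sub 1).log hb)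
  have d3 := ((hasDerivAt_id y).const_mul (2 * β)).sub_const (2 * β * (mCrit β - lCrit β))
  have d := (d3.sub d1).add d2
  refine d.congr_deriv ?_
  have hc : 1 - y ^ 2 ≠ 0 := by
    have : 1 - y ^ 2 = (1 + y) * (1 - y) := by ring
    rw [this]; exact mul_ne_zero ha hb
  have e : 2 * β * (mCrit β ^ 2 - y ^ 2) = 2 * β * (1 - y ^ 2) - 2 := by linarith
  rw [e]
  simp only [id]
  have : 1 - y ^ 2 = (1 + y) * (1 - y) := by ring
  rw [this]
  field_simp
  ring

lemma aux_zero (β : ℝ) (hβ : 1 < β) : gJump β (mCrit β) = 0 := by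
  obtain ⟨h0, h1, -⟩ := aux_mCrit β hβ
  have hl : lCrit β = (1 / β) * ((1 / 2) * Real.log ((1 + mCrit β) / (1 - mCrit β))) := rfl
  rw [gJump, hl, Real.log_div (by linarith) (by linarith)]
  have : β ≠ 0 := by linarith
  field_simp
  ring

lemma aux_tendsto (β : ℝ) :
    Filter.Tendsto (gJump β) (nhdsWithin (-1) (Set.Ioi (-1))) Filter.atTop := by
  have hlog : Filter.Tendsto (fun y : ℝ => -Real.log (1 + y))
      (nhdsWithin (-1) (Set.Ioi (-1))) Filter.atTop := by
    refine Filter.tendsto_neg_atBot_atTop.comp (Real.tendsto_log_nhdsGT_zero.comp ?_)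
    refine tendsto_nhdsWithin_iff.mpr ⟨?_, ?_⟩
    · have : ContinuousAt (fun y : ℝ => 1 + y) (-1) := by fun_prop
      have h := this.tendsto
      norm_num at h
      exact h.mono_left nhdsWithin_le_nhds
    · filter_upwards [self_mem_nhdsWithin] with y hy
      simp only [Set.mem_Ioi] at hy ⊢
      linarith
  have hc : ContinuousAt (fun y : ℝ => 2 * β * y - 2 * β * (mCrit β - lCrit β)
      + Real.log (1 - y)) (-1) := by
    have : (1 - (-1) : ℝ) ≠ 0 := by norm_num
    fun_prop (disch := assumption)
  have := (hc.tendsto.mono_left (nhdsWithin_le_nhds (s := Set.Ioi (-1)))).add_atTop hlog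
  refine this.congr fun y => ?_
  rw [gJump]; ring

/-- For β > 1: g(m_a) = 0, g has a unique zero m_b ≠ m_a in (−1,1), m_b < −m_a,
m_a is a local maximum of g, −m_a is a local minimum of g, and g(y) → +∞ as y → −1⁺. -/
theorem gJump_zeros (β : ℝ) (hβ : 1 < β) :
    gJump β (mCrit β) = 0 ∧
    (∃ m_b ∈ Set.Ioo (-1 : ℝ) 1, m_b ≠ mCrit β ∧ gJump β m_b = 0 ∧ m_b < -mCrit β ∧
      ∀ y ∈ Set.Ioo (-1 : ℝ) 1, y ≠ mCrit β → gJump β y = 0 → y = m_b) ∧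
    IsLocalMax (gJump β) (mCrit β) ∧
    IsLocalMin (gJump β) (-(mCrit β)) ∧
    Filter.Tendsto (gJump β) (nhdsWithin (-1) (Set.Ioi (-1))) Filter.atTop := by
  obtain ⟨h0, h1, -⟩ := aux_mCrit β hβ
  have hz := aux_zero β hβ
  have ht := aux_tendsto β
  have hd := aux_deriv_s6 β hβ
  set m := mCrit β with hm
  have hcont : ContinuousOn (gJump β) (Set.Ioo (-1) 1) := fun y hy =>
    (hd y hy.1 hy.2).continuousAt.continuousWithinAt
  have hA : StrictAntiOn (gJump β) (Set.Ioc (-1) (-m)) := by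
    refine strictAntiOn_of_deriv_neg (convex_Ioc _ _)
      (hcont.mono fun y hy => ⟨hy.1, by linarith [hy.2]⟩) fun y hy => ?_
    rw [interior_Ioc] at hy
    obtain ⟨a, b⟩ := hy
    rw [(hd y a (by linarith)).deriv]
    exact div_neg_of_neg_of_pos (mul_neg_of_pos_of_neg (by linarith) (by nlinarith)) (by nlinarith)
  have hB : StrictMonoOn (gJump β) (Set.Icc (-m) m) := by
    refine strictMonoOn_of_deriv_pos (convex_Icc _ _)
      (hcont.mono fun y hy => ⟨by linarith [hy.1], by linarith [hy.2]⟩) fun y hy => ?_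
    rw [interior_Icc] at hy
    obtain ⟨a, b⟩ := hy
    rw [(hd y (by linarith) (by linarith)).deriv]
    exact div_pos (mul_pos (by linarith) (by nlinarith)) (by nlinarith)
  have hC : StrictAntiOn (gJump β) (Set.Ico m 1) := by
    refine strictAntiOn_of_deriv_neg (convex_Ico _ _)
      (hcont.mono fun y hy => ⟨by linarith [hy.1], hy.2⟩) fun y hy => ?_
    rw [interior_Ico] at hy
    obtain ⟨a, b⟩ := hy
    rw [(hd y (by linarith) b).deriv]
    exact div_neg_of_neg_of_pos (mul_neg_of_pos_of_neg (by linarith) (by nlinarith)) (by nlinarith)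
  have hneg : gJump β (-m) < 0 := by
    rw [← hz]
    exact hB ⟨le_rfl, by linarith⟩ ⟨by linarith, le_rfl⟩ (by linarith)
  refine ⟨hz, ?_, ?_, ?_, ht⟩
  · obtain ⟨c, hc0, hc⟩ := ((ht.eventually_gt_atTop 0).and
      (Ioo_mem_nhdsGT (show (-1 : ℝ) < -m by linarith))).exists
    obtain ⟨b, hb, hb0⟩ := intermediate_value_Icc' hc.2.le
      (hcont.mono fun y hy => ⟨by linarith [hy.1, hc.1], by linarith [hy.2]⟩)
      (show (0 : ℝ) ∈ Set.Icc _ _ from ⟨hneg.le, hc0.le⟩)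
    have hb1 : -1 < b := by linarith [hb.1, hc.1]
    have hbm : b < -m := by
      refine lt_of_le_of_ne hb.2 fun h => ?_
      rw [h] at hb0; linarith
    refine ⟨b, ⟨hb1, by linarith⟩, by linarith, hb0, hbm, fun y hy hym hy0 => ?_⟩
    rcases le_or_gt y (-m) with h | h
    · exact hA.injOn ⟨hy.1, h⟩ ⟨hb1, hbm.le⟩ (hy0.trans hb0.symm)
    · rcases le_or_gt y m with h' | h'
      · exact absurd (hB.injOn ⟨h.le, h'⟩ ⟨by linarith, le_rfl⟩ (hy0.trans hz.symm)) hym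
      · exact absurd (hC.injOn ⟨h'.le, hy.2⟩ ⟨le_rfl, h1⟩ (hy0.trans hz.symm)) hym
  · filter_upwards [Ioo_mem_nhds (show -m < m by linarith) h1] with y hy
    rcases le_or_gt y m with h | h
    · exact hB.monotoneOn ⟨hy.1.le, h⟩ ⟨by linarith, le_rfl⟩ h
    · exact hC.antitoneOn ⟨le_rfl, h1⟩ ⟨h.le, hy.2⟩ h.le
  · filter_upwards [Ioo_mem_nhds (show -1 < -m by linarith) (show -m < m by linarith)] with y hy
    rcases le_or_gt y (-m) with h | h
    · exact hA.antitoneOn ⟨hy.1, h⟩ ⟨by linarith, le_rfl⟩ h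
    · exact hB.monotoneOn ⟨le_rfl, by linarith⟩ ⟨h.le, hy.2.le⟩ h.le
end

section
/- Let β > 1, m_a := √(1 − 1/β), λ_a := (1/β)·artanh(√(1 − 1/β)), and define g : (−1,1) → ℝ by g(y) := 2βy − 2β(m_a − λ_a) − log(1+y) + log(1−y), and let m_b be the unique zero of g in (−1,1) distinct from m_a. Then g(y) > 0 for all y ∈ (−1, m_b), g(y) < 0 for all y ∈ (m_b, m_a), g(m_a) = 0, and g(y) < 0 for all y ∈ (m_a, 1); in particular g(y) < 0 for every y ∈ [0,1) with y ≠ m_a. -/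
lemma gJump_hasDeriv (β y : ℝ) (h1 : -1 < y) (h2 : y < 1) :
    HasDerivAt (gJump β) (2 * β - 2 / (1 - y ^ 2)) y := by
  have ha : (1 + y) ≠ 0 := by linarith
  have hb : (1 - y) ≠ 0 := by linarith
  have hc : (1 - y ^ 2) ≠ 0 := by
    have : 1 - y ^ 2 = (1 + y) * (1 - y) := by ring
    rw [this]; exact mul_ne_zero ha hb
  have e1 := ((hasDerivAt_id y).const_add 1).log ha
  have e2 := ((hasDerivAt_id y).const_sub 1).log hb
  have e3 := ((((hasDerivAt_id y).const_mul (2 * β)).sub_const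
    (2 * β * (mCrit β - lCrit β))).sub e1).add e2
  refine HasDerivAt.congr_deriv (f := gJump β) e3 ?_
  simp only [id]
  have : 1 - y ^ 2 = (1 + y) * (1 - y) := by ring
  rw [this]
  field_simp
  ring

lemma gJump_lt (β a b : ℝ) (hβ : 0 < β) (ha : -1 < a) (hb : b < 1) (hab : a < b)
    (h : ∀ y, a < y → y < b → 1 < β * (1 - y ^ 2)) : gJump β a < gJump β b := by
  obtain ⟨c, hc, he⟩ := exists_hasDerivAt_eq_slope (gJump β) (fun y => 2 * β - 2 / (1 - y ^ 2)) hab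
    (fun y hy => (gJump_hasDeriv β y (by linarith [hy.1]) (by linarith [hy.2])).continuousAt.continuousWithinAt)
    (fun y hy => gJump_hasDeriv β y (by linarith [hy.1]) (by linarith [hy.2]))
  have h1 := h c hc.1 hc.2
  have hp : 0 < 1 - c ^ 2 := by nlinarith [hc.1, hc.2]
  have h2 : 2 / (1 - c ^ 2) < 2 * β := by rw [div_lt_iff₀ hp]; linarith
  have h3 : 0 < (gJump β b - gJump β a) / (b - a) := by rw [← he]; linarith
  have h4 := (div_pos_iff_of_pos_right (by linarith : 0 < b - a)).1 h3
  linarith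

lemma gJump_gt (β a b : ℝ) (ha : -1 < a) (hb : b < 1) (hab : a < b)
    (h : ∀ y, a < y → y < b → β * (1 - y ^ 2) < 1) : gJump β b < gJump β a := by
  obtain ⟨c, hc, he⟩ := exists_hasDerivAt_eq_slope (gJump β) (fun y => 2 * β - 2 / (1 - y ^ 2)) hab
    (fun y hy => (gJump_hasDeriv β y (by linarith [hy.1]) (by linarith [hy.2])).continuousAt.continuousWithinAt)
    (fun y hy => gJump_hasDeriv β y (by linarith [hy.1]) (by linarith [hy.2]))
  have h1 := h c hc.1 hc.2
  have hp : 0 < 1 - c ^ 2 := by nlinarith [hc.1, hc.2]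
  have h2 : 2 * β < 2 / (1 - c ^ 2) := by rw [lt_div_iff₀ hp]; linarith
  have h3 : (gJump β b - gJump β a) / (b - a) < 0 := by rw [← he]; linarith
  rw [div_lt_iff₀ (by linarith : 0 < b - a)] at h3
  linarith

/-- For β > 1, with m_b the unique zero of g in (−1,1) distinct from m_a:
g > 0 on (−1, m_b), g < 0 on (m_b, m_a), g(m_a) = 0, g < 0 on (m_a, 1);
in particular g(y) < 0 for every y ∈ [0,1) with y ≠ m_a. -/
theorem gJump_sign_pattern (β : ℝ) (hβ : 1 < β) (m_b : ℝ)
    (hmb : m_b ∈ Set.Ioo (-1 : ℝ) 1) (hne : m_b ≠ mCrit β) (hzero : gJump β m_b = 0)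
    (huniq : ∀ y ∈ Set.Ioo (-1 : ℝ) 1, y ≠ mCrit β → gJump β y = 0 → y = m_b) :
    (∀ y ∈ Set.Ioo (-1 : ℝ) m_b, 0 < gJump β y) ∧
    (∀ y ∈ Set.Ioo m_b (mCrit β), gJump β y < 0) ∧
    gJump β (mCrit β) = 0 ∧
    (∀ y ∈ Set.Ioo (mCrit β) 1, gJump β y < 0) ∧
    (∀ y ∈ Set.Ico (0 : ℝ) 1, y ≠ mCrit β → gJump β y < 0) := by
  have hβ0 : 0 < β := by linarith
  have hi : 1 / β < 1 := by rw [div_lt_one hβ0]; exact hβ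
  have hi0 : 0 < 1 / β := by positivity
  have hm0 : 0 < mCrit β := Real.sqrt_pos.2 (by linarith)
  have hsq : mCrit β ^ 2 = 1 - 1 / β := Real.sq_sqrt (by linarith)
  have hm1 : mCrit β < 1 := by nlinarith
  have hkey : β * (1 - mCrit β ^ 2) = 1 := by rw [hsq]; field_simp; ring
  have hg0 : gJump β (mCrit β) = 0 := by
    have hl : 2 * β * lCrit β = Real.log (1 + mCrit β) - Real.log (1 - mCrit β) := by
      have : lCrit β = (1 / β) * artanh (mCrit β) := rfl
      rw [this, artanh, Real.log_div (by linarith) (by linarith)]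
      field_simp
    unfold gJump
    linear_combination hl
  generalize mCrit β = m at *
  have hR : ∀ y, m < y → y < 1 → gJump β y < 0 := by
    intro y h1 h2
    rw [← hg0]
    refine gJump_gt β m y (by linarith) h2 h1 fun z hz _ => ?_
    have : 0 < β * (z ^ 2 - m ^ 2) := mul_pos hβ0 (by nlinarith)
    linarith
  have hM : ∀ y, -m ≤ y → y < m → gJump β y < 0 := by
    intro y h1 h2
    rw [← hg0]
    refine gJump_lt β y m hβ0 (by linarith) hm1 h2 fun z hz hz' => ?_
    have : 0 < β * (m ^ 2 - z ^ 2) := mul_pos hβ0 (by nlinarith)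
    linarith
  have hL : ∀ a b, -1 < a → a < b → b ≤ -m → gJump β b < gJump β a := by
    intro a b h1 h2 h3
    refine gJump_gt β a b h1 (by linarith) h2 fun z hz hz' => ?_
    have : 0 < β * (z ^ 2 - m ^ 2) := mul_pos hβ0 (by nlinarith)
    linarith
  have hb : m_b < -m := by
    by_contra hcon
    rcases lt_or_gt_of_ne hne with h | h
    · linarith [hM m_b (not_lt.1 hcon) h]
    · linarith [hR m_b h hmb.2]
  refine ⟨fun y hy => ?_, fun y hy => ?_, hg0, fun y hy => hR y hy.1 hy.2, fun y hy hn => ?_⟩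
  · rw [← hzero]; exact hL y m_b hy.1 hy.2 hb.le
  · rcases le_total y (-m) with h | h
    · rw [← hzero]; exact hL m_b y hmb.1 hy.1 h
    · exact hM y h hy.2
  · rcases lt_or_gt_of_ne hn with h | h
    · exact hM y (by linarith [hy.1]) h
    · exact hR y h hy.2
end

section
/- Let σ > 0, α₂ > 0, X ∈ ℝ, and let μ be the Gaussian measure on ℝ with mean X and variance σ²/(2α₂). Fix x₀ ∈ ℝ and set M := 1 − 2·μ((−∞, x₀)) (interpreting the measure of the interval as a real number). Then the two conditions 'x − 1 + M + X < 0 for every x < x₀' and 'x + 1 + M + X > 0 for every x > x₀' — i.e., the staircase profile m^{x₀}(x) (equal to +1 for x > x₀ and −1 for x < x₀) satisfies the stationarity equation m^{x₀}(x) = sign(x + m^{x₀}(x) + M + X) for every x ≠ x₀ — hold if and only if −2·μ((x₀, +∞)) ≤ x₀ + X ≤ 2·μ((−∞, x₀)). -/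
open MeasureTheory ProbabilityTheory

/-- The staircase profile with discontinuity point x₀: +1 for x > x₀, −1 for x < x₀. -/
noncomputable def staircase (x₀ : ℝ) (x : ℝ) : ℝ := if x₀ < x then 1 else -1

theorem sc_aux (x₀ X p q : ℝ) (hpq : p + q = 1) :
    (((∀ x < x₀, x - 1 + (1 - 2 * p) + X < 0) ∧ (∀ x > x₀, x + 1 + (1 - 2 * p) + X > 0)) ↔
      (-2 * q ≤ x₀ + X ∧ x₀ + X ≤ 2 * p)) := by
  constructor
  · rintro ⟨h1, h2⟩
    constructor
    · by_contra! h
      have := h2 ((x₀ + (-2 * q - X)) / 2) (by simp only [gt_iff_lt]; linarith)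
      linarith
    · by_contra! h
      have := h1 ((x₀ + (2 * p - X)) / 2) (by linarith)
      linarith
  · rintro ⟨h1, h2⟩
    constructor
    · intro x hx
      linarith
    · intro x hx
      simp only [gt_iff_lt] at *
      linarith

theorem sc_sign_pos (r : ℝ) : 1 = Real.sign r ↔ r > 0 := by
  rcases lt_trichotomy r 0 with h | h | h
  · rw [Real.sign_of_neg h]
    constructor <;> intro <;> linarith
  · subst h; simp
  · simp [Real.sign_of_pos h, h]

theorem sc_sign_neg (r : ℝ) : -1 = Real.sign r ↔ r < 0 := by
  rcases lt_trichotomy r 0 with h | h | h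
  · simp [Real.sign_of_neg h, h]
  · subst h; simp
  · rw [Real.sign_of_pos h]
    constructor <;> intro <;> linarith

theorem sc_aux2 (x₀ X M : ℝ) :
    (∀ x ≠ x₀, staircase x₀ x = Real.sign (x + staircase x₀ x + M + X)) ↔
    ((∀ x < x₀, x - 1 + M + X < 0) ∧ (∀ x > x₀, x + 1 + M + X > 0)) := by
  constructor
  · intro h
    constructor
    · intro x hx
      have := h x hx.ne
      rw [staircase, if_neg hx.not_gt, sc_sign_neg] at this
      linarith
    · intro x hx
      have := h x (ne_of_gt hx)
      rwa [staircase, if_pos hx, sc_sign_pos] at this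
  · rintro ⟨h1, h2⟩ x hx
    rcases lt_or_gt_of_ne hx with h | h
    · rw [staircase, if_neg h.not_gt, sc_sign_neg]
      linarith [h1 x h]
    · rw [staircase, if_pos h, sc_sign_pos]
      exact h2 x h

/-- Zero-temperature equilibria (Proposition 5.15): with μ = 𝒩(X, σ²/(2α₂)) and
M = 1 − 2μ((−∞,x₀)), the staircase profile m^{x₀} is stationary for the conditional
dynamics — i.e. 'x − 1 + M + X < 0 for x < x₀' and 'x + 1 + M + X > 0 for x > x₀',
equivalently m^{x₀}(x) = sign(x + m^{x₀}(x) + M + X) for every x ≠ x₀ — if and only if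
−2μ((x₀,+∞)) ≤ x₀ + X ≤ 2μ((−∞,x₀)). -/
theorem staircase_equilibria (σ α₂ X x₀ : ℝ) (hσ : 0 < σ) (hα : 0 < α₂) :
    (((∀ x < x₀, x - 1 + (1 - 2 * ((gaussianReal X (Real.toNNReal (σ^2 / (2 * α₂))))
            (Set.Iio x₀)).toReal) + X < 0) ∧
      (∀ x > x₀, x + 1 + (1 - 2 * ((gaussianReal X (Real.toNNReal (σ^2 / (2 * α₂))))
            (Set.Iio x₀)).toReal) + X > 0)) ↔
      (-2 * ((gaussianReal X (Real.toNNReal (σ^2 / (2 * α₂)))) (Set.Ioi x₀)).toReal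
          ≤ x₀ + X ∧
        x₀ + X ≤ 2 * ((gaussianReal X (Real.toNNReal (σ^2 / (2 * α₂))))
          (Set.Iio x₀)).toReal)) ∧
    ((∀ x ≠ x₀, staircase x₀ x =
        Real.sign (x + staircase x₀ x + (1 - 2 * ((gaussianReal X
          (Real.toNNReal (σ^2 / (2 * α₂)))) (Set.Iio x₀)).toReal) + X)) ↔
      (-2 * ((gaussianReal X (Real.toNNReal (σ^2 / (2 * α₂)))) (Set.Ioi x₀)).toReal
          ≤ x₀ + X ∧
        x₀ + X ≤ 2 * ((gaussianReal X (Real.toNNReal (σ^2 / (2 * α₂))))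
          (Set.Iio x₀)).toReal)) := by
  have hv : Real.toNNReal (σ^2 / (2 * α₂)) ≠ 0 := by
    have : 0 < σ^2 / (2 * α₂) := by positivity
    exact (Real.toNNReal_pos.mpr this).ne'
  generalize Real.toNNReal (σ^2 / (2 * α₂)) = v at hv ⊢
  have := noAtoms_gaussianReal (μ := X) hv
  have hpq : ((gaussianReal X v) (Set.Iio x₀)).toReal
      + ((gaussianReal X v) (Set.Ioi x₀)).toReal = 1 := by
    have h := probReal_add_probReal_compl (μ := gaussianReal X v) (s := Set.Iio x₀) measurableSet_Iio
    rw [Set.compl_Iio, measureReal_congr (Ioi_ae_eq_Ici (μ := gaussianReal X v) (a := x₀)).symm] at h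
    exact h
  rw [sc_aux2]
  exact ⟨sc_aux _ _ _ _ hpq, sc_aux _ _ _ _ hpq⟩
end
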